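/- Canonical forms are T-optimal: if U is the product of a canonical form of T-count n, then every word w over the alphabet {H, S, T} whose product of letters equals U contains at least n occurrences of the letter T. -/

import Mathlib

open Matrix Complex

noncomputable section

/-- ω = exp(2πi/3), a primitive third root of unity. -/
def ω : ℂ := exp (2 * Real.pi * I / 3)

/-- ζ = exp(2πi/9), a primitive ninth root of unity. -/
def ζ : ℂ := exp (2 * Real.pi * I / 9)

/-- The qutrit Pauli X matrix. -/
def Xmat : Matrix (Fin 3) (Fin 3) ℂ := !![0,0,1; 1,0,0; 0,1,0]

/-- The qutrit Pauli Z matrix. -/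
def Zmat : Matrix (Fin 3) (Fin 3) ℂ := !![1,0,0; 0,ω,0; 0,0,ω^2]

/-- The qutrit Hadamard matrix H = (1/(i√3))·[[1,1,1],[1,ω,ω²],[1,ω²,ω]]. -/
def Hmat : Matrix (Fin 3) (Fin 3) ℂ :=
  (I * (Real.sqrt 3 : ℂ))⁻¹ • !![1,1,1; 1,ω,ω^2; 1,ω^2,ω]

/-- The qutrit phase matrix S = ζ⁸·diag(1,1,ω). -/
def Smat : Matrix (Fin 3) (Fin 3) ℂ := ζ^8 • !![1,0,0; 0,1,0; 0,0,ω]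

/-- The qutrit T matrix T = diag(1,ζ,ζ⁸). -/
def Tmat : Matrix (Fin 3) (Fin 3) ℂ := !![1,0,0; 0,ζ,0; 0,0,ζ^8]

lemma omega_ne_zero : ω ≠ 0 := Complex.exp_ne_zero _
lemma zeta_ne_zero : ζ ≠ 0 := Complex.exp_ne_zero _

lemma omega_im_pos : 0 < ω.im := by
  have h : ω = Complex.exp ((2 * Real.pi / 3 : ℝ) * I) := by
    rw [ω]; push_cast; ring_nf
  rw [h, Complex.exp_ofReal_mul_I_im]
  apply Real.sin_pos_of_pos_of_lt_pi
  · positivity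
  · nlinarith [Real.pi_pos]

lemma omega_ne_one : ω ≠ 1 := by
  intro h
  have := omega_im_pos
  rw [h] at this
  simp at this

lemma omega_cube : ω ^ 3 = 1 := by
  rw [ω, ← Complex.exp_nat_mul]
  rw [show (3:ℕ) * (2 * Real.pi * I / 3) = 2 * Real.pi * I by push_cast; ring]
  exact Complex.exp_two_pi_mul_I

lemma detX : Xmat.det ≠ 0 := by
  simp [Xmat, Matrix.det_fin_three]

lemma detZ : Zmat.det ≠ 0 := by
  simp [Zmat, Matrix.det_fin_three, omega_ne_zero]

lemma detS : Smat.det ≠ 0 := by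
  simp [Smat, Matrix.det_fin_three, omega_ne_zero, zeta_ne_zero]

lemma detT : Tmat.det ≠ 0 := by
  simp [Tmat, Matrix.det_fin_three, zeta_ne_zero]

lemma detH : Hmat.det ≠ 0 := by
  rw [Hmat, Matrix.det_smul]
  apply mul_ne_zero
  · apply pow_ne_zero
    apply inv_ne_zero
    apply mul_ne_zero Complex.I_ne_zero
    simp [Complex.ofReal_ne_zero]
  · rw [Matrix.det_fin_three]
    simp [Matrix.vecHead, Matrix.vecTail]
    intro h
    have h3 : ω ^ 3 = 1 := omega_cube
    have key : 3 * ω * (ω - 1) = 0 := by linear_combination h + ω * h3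
    rcases mul_eq_zero.mp key with h' | h'
    · rcases mul_eq_zero.mp h' with h'' | h''
      · norm_num at h''
      · exact omega_ne_zero h''
    · exact omega_ne_one (by linear_combination h')

/-- X as an element of GL(3, ℂ). -/
def Xg : GL (Fin 3) ℂ := Matrix.GeneralLinearGroup.mkOfDetNeZero Xmat detX

/-- Z as an element of GL(3, ℂ). -/
def Zg : GL (Fin 3) ℂ := Matrix.GeneralLinearGroup.mkOfDetNeZero Zmat detZ

/-- H as an element of GL(3, ℂ). -/
def Hg : GL (Fin 3) ℂ := Matrix.GeneralLinearGroup.mkOfDetNeZero Hmat detH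

/-- S as an element of GL(3, ℂ). -/
def Sg : GL (Fin 3) ℂ := Matrix.GeneralLinearGroup.mkOfDetNeZero Smat detS

/-- T as an element of GL(3, ℂ). -/
def Tg : GL (Fin 3) ℂ := Matrix.GeneralLinearGroup.mkOfDetNeZero Tmat detT

/-- The Clifford group 𝒞: the subgroup of GL(3,ℂ) generated by H and S. -/
def Cliff : Subgroup (GL (Fin 3) ℂ) := Subgroup.closure {Hg, Sg}

/-- The Clifford+T group: the subgroup of GL(3,ℂ) generated by H, S and T. -/
def CliffT : Subgroup (GL (Fin 3) ℂ) := Subgroup.closure {Hg, Sg, Tg}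

/-- The subgroup 𝒮 of GL(3,ℂ) generated by S and X. -/
def Sgrp : Subgroup (GL (Fin 3) ℂ) := Subgroup.closure {Sg, Xg}

/-- Letters of words over the alphabet {H, S, T}. -/
inductive Letter : Type
  | H : Letter
  | S : Letter
  | T : Letter
  deriving DecidableEq

/-- The gate associated to a letter. -/
def Letter.g : Letter → GL (Fin 3) ℂ
  | .H => Hg
  | .S => Sg
  | .T => Tg

/-- The product of the letters of a word. -/
def wordProd (w : List Letter) : GL (Fin 3) ℂ := (w.map Letter.g).prod

/-- The allowed prefixes of a canonical form: ε, T, H²T. -/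
def Prefixes : Set (List Letter) := {[], [.T], [.H, .H, .T]}

/-- The allowed syllables of a canonical form: HT, H³T, SHT, SH³T, S²HT, S²H³T. -/
def Syllables : Set (List Letter) :=
  {[.H, .T], [.H, .H, .H, .T], [.S, .H, .T],
   [.S, .H, .H, .H, .T], [.S, .S, .H, .T], [.S, .S, .H, .H, .H, .T]}

/-- The T-count of a canonical form with prefix `p` and syllable list `ss`:
`k` if the prefix is empty and `k+1` otherwise, where `k` is the number of syllables. -/
def TCount (p : List Letter) (ss : List (List Letter)) : ℕ :=
  ss.length + (if p = [] then 0 else 1)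

/-- P₊ = (P + P²)/√6. -/
def Pplus (P : Matrix (Fin 3) (Fin 3) ℂ) : Matrix (Fin 3) (Fin 3) ℂ :=
  ((Real.sqrt 6 : ℂ))⁻¹ • (P + P ^ 2)

/-- P₋ = i(P − P²)/√6. -/
def Pminus (P : Matrix (Fin 3) (Fin 3) ℂ) : Matrix (Fin 3) (Fin 3) ℂ :=
  (I * ((Real.sqrt 6 : ℂ))⁻¹) • (P - P ^ 2)

/-- The ordered tuple (Q₁, …, Q₈) = (Z₊, X₊, (XZ)₊, (XZ²)₊, Z₋, X₋, (XZ)₋, (XZ²)₋). -/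
def Q : Fin 8 → Matrix (Fin 3) (Fin 3) ℂ :=
  ![Pplus Zmat, Pplus Xmat, Pplus (Xmat * Zmat), Pplus (Xmat * Zmat ^ 2),
    Pminus Zmat, Pminus Xmat, Pminus (Xmat * Zmat), Pminus (Xmat * Zmat ^ 2)]

/-- The adjoint representation Û of U, the 8×8 real matrix with
entries Û_{ij} = tr(Qᵢ U Qⱼ U†). -/
def adj (U : Matrix (Fin 3) (Fin 3) ℂ) : Matrix (Fin 8) (Fin 8) ℝ :=
  Matrix.of fun i j => (Matrix.trace (Q i * U * Q j * Uᴴ)).re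

/-- The top-left 4×4 quadrant Û₊₊. -/
def blockPP (A : Matrix (Fin 8) (Fin 8) ℝ) : Matrix (Fin 4) (Fin 4) ℝ :=
  Matrix.of fun i j => A ⟨i.val, by omega⟩ ⟨j.val, by omega⟩

/-- The top-right 4×4 quadrant Û₊₋. -/
def blockPM (A : Matrix (Fin 8) (Fin 8) ℝ) : Matrix (Fin 4) (Fin 4) ℝ :=
  Matrix.of fun i j => A ⟨i.val, by omega⟩ ⟨j.val + 4, by omega⟩

/-- The bottom-left 4×4 quadrant Û₋₊. -/
def blockMP (A : Matrix (Fin 8) (Fin 8) ℝ) : Matrix (Fin 4) (Fin 4) ℝ :=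
  Matrix.of fun i j => A ⟨i.val + 4, by omega⟩ ⟨j.val, by omega⟩

/-- The bottom-right 4×4 quadrant Û₋₋. -/
def blockMM (A : Matrix (Fin 8) (Fin 8) ℝ) : Matrix (Fin 4) (Fin 4) ℝ :=
  Matrix.of fun i j => A ⟨i.val + 4, by omega⟩ ⟨j.val + 4, by omega⟩

/-- α = sin(2π/9). -/
def αR : ℝ := Real.sin (2 * Real.pi / 9)

/-- The ring ℤ[α]: the subring of ℝ generated by 1/2 and α. -/
def Zα : Subring ℝ := Subring.closure {1/2, αR}

/-- The ring ℤ[1/2, 1/α]: the subring of ℝ generated by 1/2, α and α⁻¹. -/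
def Zhα : Subring ℝ := Subring.closure {1/2, αR, αR⁻¹}

lemma alpha_mem_Zα : αR ∈ Zα := Subring.subset_closure (by simp)

/-! ### Roots of unity -/

lemma zeta_cube : ζ ^ 3 = ω := by
  rw [ζ, ω, ← Complex.exp_nat_mul]
  congr 1
  push_cast
  ring

lemma omega_rel : ω ^ 2 + ω + 1 = 0 := by
  have h := omega_cube
  have h1 : (ω - 1) * (ω ^ 2 + ω + 1) = 0 := by linear_combination h
  rcases mul_eq_zero.mp h1 with h2 | h2
  · exact absurd (sub_eq_zero.mp h2) omega_ne_one
  · exact h2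

lemma zeta_rel : ζ ^ 6 + ζ ^ 3 + 1 = 0 := by
  have h := omega_rel
  rw [← zeta_cube] at h
  linear_combination h

lemma I_sqrt_three : I * (Real.sqrt 3 : ℂ) = 1 + 2 * ω := by
  have h : ω = Complex.exp ((2 * Real.pi / 3 : ℝ) * I) := by
    rw [ω]; push_cast; ring_nf
  have hc : Real.cos (2 * Real.pi / 3) = -(1 / 2) := by
    rw [show 2 * Real.pi / 3 = Real.pi - Real.pi / 3 by ring, Real.cos_pi_sub,
      Real.cos_pi_div_three]
  have hs : Real.sin (2 * Real.pi / 3) = Real.sqrt 3 / 2 := by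
    rw [show 2 * Real.pi / 3 = Real.pi - Real.pi / 3 by ring, Real.sin_pi_sub,
      Real.sin_pi_div_three]
  rw [h]
  apply Complex.ext
  · rw [Complex.add_re, Complex.mul_re, Complex.mul_re, Complex.exp_ofReal_mul_I_re, hc]
    simp
  · rw [Complex.add_im, Complex.mul_im, Complex.mul_im, Complex.exp_ofReal_mul_I_im, hs]
    simp
    ring

/-! ### The ring of algebraic integers and its quotient -/

/-- Algebraic integers in ℂ. -/
abbrev AI : Type := integralClosure ℤ ℂ

lemma zeta_integral : IsIntegral ℤ ζ := by
  have h9 : ζ ^ 9 = 1 := by linear_combination (ζ ^ 3 - 1) * zeta_rel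
  exact IsIntegral.of_pow (n := 9) (by norm_num) (by rw [h9]; exact isIntegral_one)

/-- ζ as an algebraic integer. -/
def zI : AI := ⟨ζ, zeta_integral⟩

/-- The uniformizer ζ - 1. -/
def mI : AI := zI - 1

lemma zI_rel : zI ^ 6 + zI ^ 3 + 1 = 0 := Subtype.ext zeta_rel

/-- The residue ring. -/
abbrev kI : Type := AI ⧸ Ideal.span {mI}

/-- Reduction. -/
def red : AI →+* kI := Ideal.Quotient.mk _

lemma three_not_unit (y : AI) : 3 * y ≠ 1 := by
  intro h
  have h1 : (3 : ℂ) * (y : ℂ) = 1 := congrArg Subtype.val h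
  have h2 : (y : ℂ) = algebraMap ℚ ℂ (1 / 3) := by
    simp only [map_div₀, map_one, map_ofNat]
    rw [eq_div_iff (by norm_num)]
    linear_combination h1
  have h3 : IsIntegral ℤ (algebraMap ℚ ℂ (1 / 3)) := h2 ▸ y.2
  rw [isIntegral_algebraMap_iff (algebraMap ℚ ℂ).injective] at h3
  obtain ⟨n, hn⟩ := IsIntegrallyClosed.isIntegral_iff.mp h3
  have h4 : (3 : ℚ) * (n : ℚ) = 1 := by
    have : (n : ℚ) = 1 / 3 := hn
    rw [this]; norm_num
  have h5 : 3 * n = 1 := by exact_mod_cast h4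
  omega

instance : Nontrivial kI := by
  apply Ideal.Quotient.nontrivial_iff.mpr
  intro h
  rw [Ideal.span_singleton_eq_top] at h
  obtain ⟨r, hr⟩ := h.exists_right_inv
  apply three_not_unit ((-2 * zI + 5 * zI ^ 2 - 7 * zI ^ 3 + 5 * zI ^ 4 - 2 * zI ^ 5) * r ^ 6)
  have h6 : mI ^ 6 = 3 * (-2 * zI + 5 * zI ^ 2 - 7 * zI ^ 3 + 5 * zI ^ 4 - 2 * zI ^ 5) := by
    rw [mI]
    linear_combination zI_rel
  rw [← mul_assoc, ← h6, ← mul_pow, hr, one_pow]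

lemma red_z : red zI = 1 := by
  have : red (zI - 1) = 0 := Ideal.Quotient.eq_zero_iff_mem.mpr (Ideal.mem_span_singleton_self _)
  rw [map_sub, map_one] at this
  exact sub_eq_zero.mp this

lemma three_k : (3 : kI) = 0 := by
  have := congrArg red zI_rel
  simp only [map_add, map_pow, red_z, map_one, map_zero] at this
  linear_combination this

/-! ### Integral models of the gates in the Clifford-invariant lattice -/

/-- Basis of the lattice (rescaled). -/
def Pm : Matrix (Fin 3) (Fin 3) ℂ := !![1,0,0; 1,(ζ-1)^2,(ζ-1)^3; 1,-(ζ-1)^2,0]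

/-- Integral model of a letter (that of T being scaled by ζ - 1). -/
def liftL : Letter → Matrix (Fin 3) (Fin 3) AI
  | .H => !![-1 - 2*zI^3, 0, 1 - zI + zI^2 + zI^3 - 2*zI^4 + 2*zI^5;
             1 + zI + zI^2 + zI^3 - zI^5, 1, zI^3 - zI^4;
             2*zI + 4*zI^2 + 4*zI^3 + 4*zI^4 + 2*zI^5, 0, 1 + 2*zI^3]
  | .S => !![-zI^2 - zI^5, 0, 0;
             1 + 2*zI + zI^2 + zI^3 + zI^4, zI^2, 0;
             -1 + zI + 2*zI^2 + zI^3 + 2*zI^4 + 2*zI^5, -1 - zI + zI^2 + zI^5, -zI^2 - zI^5]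
  | .T => !![-1 + zI, 0, 0;
             -zI^2 - zI^5, 1 + zI^2 + zI^5, 0;
             -zI^2 - zI^5, zI + zI^2 + zI^5, -zI + zI^2]

/-- T-weight of a letter. -/
def wt : Letter → ℕ
  | .T => 1
  | _ => 0

/-- Inclusion of algebraic integers into ℂ. -/
def inc : AI →+* ℂ := (integralClosure ℤ ℂ).toSubring.subtype

lemma inc_z : inc zI = ζ := rfl
lemma inc_two : inc 2 = 2 := map_ofNat inc 2
lemma inc_four : inc 4 = 4 := map_ofNat inc 4
lemma inc_inj : Function.Injective inc := Subtype.val_injective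

lemma one_add_two_omega_ne : (1 + 2 * ω) ≠ 0 := by
  intro h
  have h3 : (3 : ℂ) = 0 := by
    linear_combination 4 * omega_rel - (1 + 2 * ω) * h
  norm_num at h3

lemma Hval : ((Hg : GL (Fin 3) ℂ) : Matrix (Fin 3) (Fin 3) ℂ) = Hmat := rfl
lemma Sval : ((Sg : GL (Fin 3) ℂ) : Matrix (Fin 3) (Fin 3) ℂ) = Smat := rfl
lemma Tval : ((Tg : GL (Fin 3) ℂ) : Matrix (Fin 3) (Fin 3) ℂ) = Tmat := rfl

lemma lift_H : Hmat * Pm = Pm * (liftL .H).map inc := by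
  have hz := zeta_rel
  have key : !![1,1,1; 1,ω,ω^2; 1,ω^2,ω] * Pm = (1 + 2 * ω) • (Pm * (liftL .H).map inc) := by
    rw [← zeta_cube]
    ext i j
    fin_cases i <;> fin_cases j <;>
      simp [Pm, liftL, Matrix.mul_apply, Fin.sum_univ_three, inc_z, inc_two, inc_four,
        Matrix.vecMul, dotProduct] <;> grind
  rw [Hmat, Matrix.smul_mul, key, I_sqrt_three, smul_smul, inv_mul_cancel₀ one_add_two_omega_ne,
    one_smul]

lemma lift_S : Smat * Pm = Pm * (liftL .S).map inc := by
  have hz := zeta_rel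
  rw [Smat, ← zeta_cube]
  ext i j
  fin_cases i <;> fin_cases j <;>
    simp [Pm, liftL, Matrix.mul_apply, Fin.sum_univ_three, inc_z, inc_two, inc_four,
        Matrix.vecMul, dotProduct] <;> grind

lemma lift_T : (ζ - 1) • (Tmat * Pm) = Pm * (liftL .T).map inc := by
  have hz := zeta_rel
  rw [Tmat]
  ext i j
  fin_cases i <;> fin_cases j <;>
    simp [Pm, liftL, Matrix.mul_apply, Fin.sum_univ_three, inc_z, inc_two, inc_four,
        Matrix.vecMul, dotProduct] <;> grind

lemma lift_letter (l : Letter) :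
    (ζ - 1) ^ wt l • ((l.g : Matrix (Fin 3) (Fin 3) ℂ) * Pm) = Pm * (liftL l).map inc := by
  cases l
  · simpa [wt, Letter.g, Hval] using lift_H
  · simpa [wt, Letter.g, Sval] using lift_S
  · simpa [wt, Letter.g, Tval] using lift_T

/-- Integral model of a word. -/
def liftW (w : List Letter) : Matrix (Fin 3) (Fin 3) AI := (w.map liftL).prod

lemma liftW_append (v w : List Letter) : liftW (v ++ w) = liftW v * liftW w := by
  simp [liftW]

lemma liftW_spec (w : List Letter) :
    (ζ - 1) ^ w.count .T • ((wordProd w : Matrix (Fin 3) (Fin 3) ℂ) * Pm)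
      = Pm * (liftW w).map inc := by
  induction w with
  | nil => simp [wordProd, liftW]
  | cons l w ih =>
    have hcount : (l :: w).count .T = wt l + w.count .T := by
      cases l <;> simp [wt, List.count_cons, add_comm]
    have h1 : wordProd (l :: w) = l.g * wordProd w := by simp [wordProd]
    have h2 : liftW (l :: w) = liftL l * liftW w := by simp [liftW]
    rw [hcount, h1, h2, Matrix.map_mul, ← Matrix.mul_assoc, ← lift_letter, Units.val_mul,
      Matrix.mul_assoc, pow_add, mul_smul, ← Matrix.mul_smul, ih, Matrix.smul_mul,
      Matrix.mul_assoc]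

/-! ### Clifford elements are integral -/

lemma H_pow : Hg ^ 4 = 1 := by
  have h2 : Hmat * Hmat = !![-1,0,0; 0,0,-1; 0,-1,0] := by
    have hw := omega_rel
    have key : (!![1,1,1; 1,ω,ω^2; 1,ω^2,ω] * !![1,1,1; 1,ω,ω^2; 1,ω^2,ω] :
        Matrix (Fin 3) (Fin 3) ℂ) =
        ((1 + 2 * ω) * (1 + 2 * ω)) • !![-1,0,0; 0,0,-1; 0,-1,0] := by
      ext i j
      fin_cases i <;> fin_cases j <;>
        simp [Matrix.mul_apply, Fin.sum_univ_three] <;> grind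
    have hne := one_add_two_omega_ne
    rw [Hmat, Matrix.smul_mul, Matrix.mul_smul, key, I_sqrt_three, smul_smul, smul_smul]
    rw [show (1 + 2 * ω)⁻¹ * (1 + 2 * ω)⁻¹ * ((1 + 2 * ω) * (1 + 2 * ω)) = 1 by
      field_simp, one_smul]
  apply Units.ext
  rw [show Hg ^ 4 = (Hg * Hg) * (Hg * Hg) by simp only [pow_succ, pow_zero, one_mul, mul_assoc]]
  simp only [Units.val_mul, Hval, h2, Units.val_one]
  ext i j
  fin_cases i <;> fin_cases j <;> simp [Matrix.mul_apply, Fin.sum_univ_three]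

lemma S_pow : Sg ^ 9 = 1 := by
  have h9 : ζ ^ 9 = 1 := by linear_combination (ζ ^ 3 - 1) * zeta_rel
  have hd : Smat = Matrix.diagonal ![ζ ^ 8, ζ ^ 8, ζ ^ 11] := by
    rw [Smat, ← zeta_cube]
    ext i j
    fin_cases i <;> fin_cases j <;> simp <;> ring
  apply Units.ext
  rw [Units.val_pow_eq_pow_val, Sval, hd, Matrix.diagonal_pow, Units.val_one]
  have h8 : (ζ ^ 8) ^ 9 = 1 := by rw [← pow_mul, mul_comm, pow_mul, h9, one_pow]
  have h11 : (ζ ^ 11) ^ 9 = 1 := by rw [← pow_mul, mul_comm, pow_mul, h9, one_pow]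
  ext i j
  fin_cases i <;> fin_cases j <;> simp [h8, h11]

/-- T-free words represent all Clifford elements. -/
lemma cliff_word (c : GL (Fin 3) ℂ) (hc : c ∈ Cliff) :
    ∃ w : List Letter, w.count .T = 0 ∧ wordProd w = c := by
  have hHinv : Hg⁻¹ = wordProd [.H, .H, .H] := by
    rw [inv_eq_iff_mul_eq_one, ← H_pow]
    simp [wordProd, Letter.g, pow_succ, mul_assoc]
  have hSinv : Sg⁻¹ = wordProd [.S, .S, .S, .S, .S, .S, .S, .S] := by
    rw [inv_eq_iff_mul_eq_one, ← S_pow]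
    simp [wordProd, Letter.g, pow_succ, mul_assoc]
  induction hc using Subgroup.closure_induction'' with
  | mem x hx =>
    rcases hx with rfl | hx
    · exact ⟨[.H], by decide, by simp [wordProd, Letter.g]⟩
    · rw [Set.mem_singleton_iff] at hx
      exact ⟨[.S], by decide, by simp [wordProd, Letter.g, hx]⟩
  | inv_mem x hx =>
    rcases hx with rfl | hx
    · exact ⟨[.H, .H, .H], by decide, hHinv.symm⟩
    · rw [Set.mem_singleton_iff] at hx
      exact ⟨[.S, .S, .S, .S, .S, .S, .S, .S], by decide, by rw [hx]; exact hSinv.symm⟩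
  | one => exact ⟨[], by simp, by simp [wordProd]⟩
  | mul x y _ _ hx hy =>
    obtain ⟨v, hv, rfl⟩ := hx
    obtain ⟨w, hw, rfl⟩ := hy
    exact ⟨v ++ w, by simp [hv, hw], by simp [wordProd]⟩

/-! ### Residues of canonical words -/

/-- Residue of a letter, over any commutative ring. -/
def resG (k : Type) [CommRing k] : Letter → Matrix (Fin 3) (Fin 3) k
  | .H => !![0,0,-1; 0,1,0; 1,0,0]
  | .S => !![1,0,0; 0,1,0; 1,0,1]
  | .T => !![0,0,0; 1,0,0; 1,0,0]

lemma map_liftL {k : Type} [CommRing k] (f : AI →+* k) (hz : f zI = 1) (h3 : (3 : k) = 0)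
    (l : Letter) : (liftL l).map f = resG k l := by
  have h2 : f 2 = 2 := map_ofNat f 2
  have h4 : f 4 = 4 := map_ofNat f 4
  cases l <;> ext i j <;> fin_cases i <;> fin_cases j <;>
    simp [liftL, resG, hz, h2, h4] <;> grind

/-- Residue of a letter. -/
abbrev resL (l : Letter) : Matrix (Fin 3) (Fin 3) kI := resG kI l

lemma red_liftL (l : Letter) : (liftL l).map red = resL l :=
  map_liftL red red_z three_k l

/-- Action of a word on a residue vector. -/
def act (w : List Letter) (x : Fin 3 → kI) : Fin 3 → kI :=
  w.foldr (fun l y => resL l *ᵥ y) x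

lemma act_append (v w : List Letter) (x : Fin 3 → kI) :
    act (v ++ w) x = act v (act w x) := by
  simp [act]

lemma act_eq (w : List Letter) (x : Fin 3 → kI) : act w x = ((liftW w).map red) *ᵥ x := by
  induction w with
  | nil => simp [act, liftW]
  | cons l w ih =>
    have h2 : liftW (l :: w) = liftL l * liftW w := by simp [liftW]
    rw [h2, Matrix.map_mul, ← Matrix.mulVec_mulVec, ← ih, red_liftL]
    rfl

lemma act_H (a b c : kI) : resL .H *ᵥ ![a, b, c] = ![-c, b, a] := by
  ext i; fin_cases i <;> simp [resG, Matrix.mulVec, dotProduct, Fin.sum_univ_three]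
  exact neg_one_mul c
lemma act_S (a b c : kI) : resL .S *ᵥ ![a, b, c] = ![a, b, a + c] := by
  ext i; fin_cases i <;> simp [resG, Matrix.mulVec, dotProduct, Fin.sum_univ_three]
lemma act_T (a b c : kI) : resL .T *ᵥ ![a, b, c] = ![0, a, a] := by
  ext i; fin_cases i <;> simp [resG, Matrix.mulVec, dotProduct, Fin.sum_univ_three]

/-- Syllables preserve having first coordinate nonzero. -/
lemma act_syl (s : List Letter) (hs : s ∈ Syllables) (x : Fin 3 → kI) (hx : x 0 ≠ 0) :
    act s x 0 ≠ 0 := by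
  have hx' : x = ![x 0, x 1, x 2] := by ext i; fin_cases i <;> rfl
  rw [hx']
  simp only [Syllables, Set.mem_insert_iff, Set.mem_singleton_iff] at hs
  rcases hs with rfl | rfl | rfl | rfl | rfl | rfl <;>
    simpa [act, act_H, act_S, act_T] using hx

lemma act_first (p : List Letter) (hp : p ∈ Prefixes) (x : Fin 3 → kI) (hx : x 0 ≠ 0) :
    act p x ≠ 0 := by
  have hx' : x = ![x 0, x 1, x 2] := by ext i; fin_cases i <;> rfl
  intro h
  rw [hx'] at h
  have h0 := congrFun h 0
  have h1 := congrFun h 1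
  simp only [Prefixes, Set.mem_insert_iff, Set.mem_singleton_iff] at hp
  rcases hp with rfl | rfl | rfl <;>
    simp [act, act_H, act_T] at h0 h1 <;> exact hx (by assumption)

lemma act_flatten (ss : List (List Letter)) (hss : ∀ s ∈ ss, s ∈ Syllables) :
    act ss.flatten ![1, 0, 0] 0 ≠ 0 := by
  induction ss with
  | nil => simp [act]
  | cons s ss ih =>
    rw [List.flatten_cons, act_append]
    exact act_syl s (hss s (by simp)) _ (ih fun t ht => hss t (by simp [ht]))

lemma count_canon (p : List Letter) (ss : List (List Letter))
    (hp : p ∈ Prefixes) (hss : ∀ s ∈ ss, s ∈ Syllables) :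
    (p ++ ss.flatten).count .T = TCount p ss := by
  have h1 : ss.flatten.count .T = ss.length := by
    induction ss with
    | nil => simp
    | cons s ss ih =>
      have hs := hss s (by simp)
      have : s.count .T = 1 := by
        simp only [Syllables, Set.mem_insert_iff, Set.mem_singleton_iff] at hs
        rcases hs with rfl | rfl | rfl | rfl | rfl | rfl <;> decide
      rw [List.flatten_cons, List.count_append, this, ih fun t ht => hss t (by simp [ht])]
      simp [add_comm]
  rw [List.count_append, h1, TCount, add_comm]
  congr 1
  simp only [Prefixes, Set.mem_insert_iff, Set.mem_singleton_iff] at hp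
  rcases hp with rfl | rfl | rfl <;> decide

lemma mu_ne : ζ - 1 ≠ 0 := by
  intro h
  have h1 : ζ = 1 := sub_eq_zero.mp h
  have := zeta_rel
  rw [h1] at this
  norm_num at this

lemma Pm_cancel (A B : Matrix (Fin 3) (Fin 3) ℂ) (h : Pm * A = Pm * B) : A = B := by
  have hd : Pm.det ≠ 0 := by
    have : Pm.det = (ζ - 1) ^ 5 := by
      simp [Pm, Matrix.det_fin_three]
      ring
    rw [this]
    exact pow_ne_zero _ mu_ne
  have hu : IsUnit Pm.det := isUnit_iff_ne_zero.mpr hd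
  rw [← Matrix.nonsing_inv_mul_cancel_left _ A hu, h, Matrix.nonsing_inv_mul_cancel_left _ B hu]

/-- Canonical forms are T-optimal: if U is the product of a canonical
form of T-count n, then every word w over the alphabet {H, S, T} whose product of
letters equals U contains at least n occurrences of the letter T. -/
theorem canonical_forms_are_T_optimal
    (p : List Letter) (ss : List (List Letter)) (c : GL (Fin 3) ℂ)
    (hp : p ∈ Prefixes) (hss : ∀ s ∈ ss, s ∈ Syllables) (hc : c ∈ Cliff)
    (U : GL (Fin 3) ℂ) (hU : U = wordProd (p ++ ss.flatten) * c)
    (n : ℕ) (hn : n = TCount p ss) :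
    ∀ w : List Letter, wordProd w = U → n ≤ w.count Letter.T := by


  intro w hw
  by_contra hlt
  push Not at hlt
  have hcount := count_canon p ss hp hss
  rw [← hn] at hcount
  obtain ⟨v, hv, hvc⟩ := cliff_word c⁻¹ (Cliff.inv_mem hc)
  have heq : wordProd (w ++ v) = wordProd (p ++ ss.flatten) := by
    have : wordProd (w ++ v) = wordProd w * wordProd v := by simp [wordProd]
    rw [this, hw, hU, hvc, mul_inv_cancel_right]
  have h1 := liftW_spec (p ++ ss.flatten)
  have h2 := liftW_spec (w ++ v)
  rw [List.count_append, hv, add_zero, heq] at h2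
  rw [hcount] at h1
  obtain ⟨d, rfl⟩ : ∃ d, n = d + 1 + w.count .T := ⟨n - w.count .T - 1, by omega⟩
  rw [pow_add, mul_smul, h2, ← Matrix.mul_smul] at h1
  have h3 := Pm_cancel _ _ h1
  have h4 : liftW (p ++ ss.flatten) = mI ^ (d + 1) • liftW (w ++ v) := by
    ext i j
    have h5 := congrFun (congrFun h3 i) j
    exact h5.symm
  have hm : red mI = 0 :=
    Ideal.Quotient.eq_zero_iff_mem.mpr (Ideal.mem_span_singleton_self _)
  have h6 : (liftW (p ++ ss.flatten)).map red = 0 := by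
    rw [h4]
    ext i j
    simp [hm]
  apply act_first p hp _ (act_flatten ss hss)
  rw [← act_append, act_eq, h6, Matrix.zero_mulVec]

end
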